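/- Let M be a QKT-manifold of dimension 4n > 4. Then for any local adapted basis I,J,K the following conditions are equivalent: (1) the almost complex structure I is integrable (N_I = 0); (2) the Lee forms J d*ω_J and K d*ω_K are equal; (3) Jλ_J = Kλ_K; (4) Jγ_J = Kγ_K; (5) Λ_K dω_J = −Λ_J dω_K; (6) JΛ_K dω_I = −KΛ_J dω_I; (7) JΛ_I dω_K = −KΛ_I dω_J. -/

import Mathlib

/-!  Synthetic (Koszul-style) model of an almost quaternion-Hermitian `4n`-manifold.

`C` plays the role of the commutative ℝ-algebra of smooth functions and `V` that of
the `C`-module of vector fields, equipped with a directional derivative `D`, a Lie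
bracket, a Riemannian metric `g` together with its Levi-Civita connection `nab`
(characterised by being torsion-free and metric), a local adapted basis `I, J, K`
of anticommuting almost complex structures with `K = I J`, each compatible with the
metric, and a (local) orthonormal frame.  -/

noncomputable section

open scoped BigOperators

structure AQH (n : ℕ) (C : Type*) (V : Type*) [CommRing C] [Algebra ℝ C]
    [AddCommGroup V] [Module C V] where
  /-- derivative of a function along a vector field -/
  D : V → C → C
  D_add : ∀ X f g, D X (f + g) = D X f + D X g
  D_mul : ∀ X f g, D X (f * g) = f * D X g + g * D X f
  D_const : ∀ X (r : ℝ), D X (algebraMap ℝ C r) = 0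
  D_addX : ∀ X Y f, D (X + Y) f = D X f + D Y f
  D_smulX : ∀ (f : C) (X : V) (h : C), D (f • X) h = f * D X h
  /-- the Lie bracket of vector fields -/
  bracket : V → V → V
  bracket_skew : ∀ X Y, bracket X Y = -bracket Y X
  bracket_add : ∀ X Y Z, bracket X (Y + Z) = bracket X Y + bracket X Z
  bracket_smul : ∀ X (f : C) Y, bracket X (f • Y) = f • bracket X Y + (D X f) • Y
  bracket_jacobi : ∀ X Y Z,
    bracket X (bracket Y Z) + bracket Y (bracket Z X) + bracket Z (bracket X Y) = 0
  D_bracket : ∀ X Y f, D (bracket X Y) f = D X (D Y f) - D Y (D X f)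
  /-- the Riemannian metric -/
  g : V → V → C
  g_symm : ∀ X Y, g X Y = g Y X
  g_add : ∀ X Y Z, g (X + Y) Z = g X Z + g Y Z
  g_smul : ∀ (f : C) X Y, g (f • X) Y = f * g X Y
  /-- the Levi-Civita connection -/
  nab : V → V → V
  nab_addX : ∀ X Y Z, nab (X + Y) Z = nab X Z + nab Y Z
  nab_smulX : ∀ (f : C) X Y, nab (f • X) Y = f • nab X Y
  nab_add : ∀ X Y Z, nab X (Y + Z) = nab X Y + nab X Z
  nab_leibniz : ∀ X (f : C) Y, nab X (f • Y) = f • nab X Y + (D X f) • Y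
  torsion_free : ∀ X Y, nab X Y - nab Y X = bracket X Y
  nab_metric : ∀ X Y Z, D X (g Y Z) = g (nab X Y) Z + g Y (nab X Z)
  /-- the (local) adapted basis of almost complex structures -/
  I : V → V
  J : V → V
  K : V → V
  I_lin : ∀ (f : C) X Y, I (f • X + Y) = f • I X + I Y
  J_lin : ∀ (f : C) X Y, J (f • X + Y) = f • J X + J Y
  K_lin : ∀ (f : C) X Y, K (f • X + Y) = f • K X + K Y
  I_sq : ∀ X, I (I X) = -X
  J_sq : ∀ X, J (J X) = -X
  K_def : ∀ X, K X = I (J X)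
  anticomm : ∀ X, I (J X) = -J (I X)
  I_metric : ∀ X Y, g (I X) (I Y) = g X Y
  J_metric : ∀ X Y, g (J X) (J Y) = g X Y
  /-- a (local) orthonormal frame -/
  frame : Fin (4 * n) → V
  frame_orthonormal : ∀ i j, g (frame i) (frame j) = if i = j then 1 else 0
  frame_span : ∀ X, X = ∑ i, g X (frame i) • frame i

namespace AQH

section ops

variable {C V : Type*} [CommRing C]

/-- the operator `A_(1)` on covariant 3-tensors -/
def op1 (A : V → V) (ψ : V → V → V → C) : V → V → V → C := fun X Y Z => -ψ (A X) Y Z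

/-- the operator `A_(2)` on covariant 3-tensors -/
def op2 (A : V → V) (ψ : V → V → V → C) : V → V → V → C := fun X Y Z => -ψ X (A Y) Z

/-- the operator `A_(3)` on covariant 3-tensors -/
def op3 (A : V → V) (ψ : V → V → V → C) : V → V → V → C := fun X Y Z => -ψ X Y (A Z)

/-- the operator `A_(12) = A_(1) A_(2)` on covariant 3-tensors -/
def op12 (A : V → V) (ψ : V → V → V → C) : V → V → V → C := fun X Y Z => ψ (A X) (A Y) Z

/-- the operator `A_(13) = A_(1) A_(3)` on covariant 3-tensors -/
def op13 (A : V → V) (ψ : V → V → V → C) : V → V → V → C := fun X Y Z => ψ (A X) Y (A Z)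

/-- the operator `A_(23) = A_(2) A_(3)` on covariant 3-tensors -/
def op23 (A : V → V) (ψ : V → V → V → C) : V → V → V → C := fun X Y Z => ψ X (A Y) (A Z)

/-- the operator `𝓛_A = A_(12) + A_(13) + A_(23)` on three-forms -/
def calL (A : V → V) (ψ : V → V → V → C) : V → V → V → C :=
  fun X Y Z => op12 A ψ X Y Z + op13 A ψ X Y Z + op23 A ψ X Y Z

/-- the action `(A ν)(X) = -ν (A X)` of `A` on a one-form -/
def act1 (A : V → V) (ν : V → C) : V → C := fun X => -ν (A X)

/-- the action `(A ψ)(X,Y,Z) = -ψ(AX,AY,AZ)` of `A` on a three-form -/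
def act3 (A : V → V) (ψ : V → V → V → C) : V → V → V → C :=
  fun X Y Z => -ψ (A X) (A Y) (A Z)

/-- wedge product of two one-forms -/
def wedge11 (α β : V → C) : V → V → C := fun X Y => α X * β Y - α Y * β X

/-- wedge product of a one-form and a two-form -/
def wedge12 (ν : V → C) (ω : V → V → C) : V → V → V → C :=
  fun X Y Z => ν X * ω Y Z - ν Y * ω X Z + ν Z * ω X Y

/-- wedge product of two two-forms -/
def wedge22 (α β : V → V → C) : V → V → V → V → C := fun X Y Z W =>
  α X Y * β Z W - α X Z * β Y W + α X W * β Y Z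
    + α Z W * β X Y - α Y W * β X Z + α Y Z * β X W

/-- a (0,3)-tensor is an alternating three-form -/
def IsAlt3 (T : V → V → V → C) : Prop :=
  (∀ X Y Z, T Y X Z = -T X Y Z) ∧ (∀ X Y Z, T X Z Y = -T X Y Z)

variable [AddCommGroup V] [Module C V]

/-- `C`-linearity (tensoriality) of a three-form in its first argument -/
def Lin3 (T : V → V → V → C) : Prop :=
  ∀ (f : C) X X' Y Z, T (f • X + X') Y Z = f * T X Y Z + T X' Y Z

/-- `C`-linearity (tensoriality) of a one-form -/
def Lin1 (ν : V → C) : Prop := ∀ (f : C) X X', ν (f • X + X') = f * ν X + ν X'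

end ops

section derived

variable {n : ℕ} {C V : Type*} [CommRing C] [Algebra ℝ C] [AddCommGroup V] [Module C V]
  [Module ℝ V] [IsScalarTower ℝ C V]

variable (M : AQH n C V)

/-- the Kähler form `ω_A(X,Y) = g(X, A Y)` -/
def omega (A : V → V) : V → V → C := fun X Y => M.g X (A Y)

/-- `(∇_X A) Y` -/
def nabA (A : V → V) : V → V → V := fun X Y => M.nab X (A Y) - A (M.nab X Y)

/-- covariant derivative of a 2-form: `(∇_X ψ)(Y,Z)` -/
def nab2 (ψ : V → V → C) : V → V → V → C :=
  fun X Y Z => M.D X (ψ Y Z) - ψ (M.nab X Y) Z - ψ Y (M.nab X Z)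

/-- covariant derivative of a 4-form -/
def nab4 (ψ : V → V → V → V → C) : V → V → V → V → V → C :=
  fun X Y Z W U => M.D X (ψ Y Z W U) - ψ (M.nab X Y) Z W U - ψ Y (M.nab X Z) W U
    - ψ Y Z (M.nab X W) U - ψ Y Z W (M.nab X U)

/-- exterior derivative of a one-form -/
def d1 (ν : V → C) : V → V → C :=
  fun X Y => M.D X (ν Y) - M.D Y (ν X) - ν (M.bracket X Y)

/-- exterior derivative of a two-form -/
def d2 (ψ : V → V → C) : V → V → V → C :=
  fun X Y Z => M.D X (ψ Y Z) - M.D Y (ψ X Z) + M.D Z (ψ X Y)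
    - ψ (M.bracket X Y) Z + ψ (M.bracket X Z) Y - ψ (M.bracket Y Z) X

/-- exterior derivative of a four-form -/
def d4 (ψ : V → V → V → V → C) : V → V → V → V → V → C := fun X Y Z W U =>
  M.D X (ψ Y Z W U) - M.D Y (ψ X Z W U) + M.D Z (ψ X Y W U) - M.D W (ψ X Y Z U)
      + M.D U (ψ X Y Z W)
    - ψ (M.bracket X Y) Z W U + ψ (M.bracket X Z) Y W U - ψ (M.bracket X W) Y Z U
      + ψ (M.bracket X U) Y Z W
    - ψ (M.bracket Y Z) X W U + ψ (M.bracket Y W) X Z U - ψ (M.bracket Y U) X Z W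
    - ψ (M.bracket Z W) X Y U + ψ (M.bracket Z U) X Y W
    - ψ (M.bracket W U) X Y Z

/-- the Nijenhuis tensor `N_A(X,Y)` -/
def nijV (A : V → V) : V → V → V := fun X Y =>
  M.bracket X Y + A (M.bracket (A X) Y) + A (M.bracket X (A Y)) - M.bracket (A X) (A Y)

/-- the Nijenhuis `(0,3)`-tensor `N_A(X,Y,Z) = g(X, N_A(Y,Z))` -/
def nij3 (A : V → V) : V → V → V → C := fun X Y Z => M.g X (M.nijV A Y Z)

/-- the induced inner product of two 2-forms,
`⟨ψ,φ⟩ = (1/2!) ψ(e_i,e_j) φ(e_i,e_j)` -/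
def inner2 (ψ φ : V → V → C) : C :=
  (1/2 : ℝ) • ∑ i, ∑ j, ψ (M.frame i) (M.frame j) * φ (M.frame i) (M.frame j)

/-- the contraction `(Λ_A β)(X) = ⟨X ⌟ β, ω_A⟩` of a three-form -/
def Lam (A : V → V) (β : V → V → V → C) : V → C :=
  fun X => (1/2 : ℝ) •
    ∑ i, ∑ j, β X (M.frame i) (M.frame j) * M.omega A (M.frame i) (M.frame j)

/-- `λ_I(X) = (1/2n) ⟨∇_X ω_J, ω_K⟩` -/
def lambdaI : V → C := fun X =>
  (1/(2*(n:ℝ))) • M.inner2 (fun Y Z => M.nab2 (M.omega M.J) X Y Z) (M.omega M.K)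

/-- `λ_J(X) = (1/2n) ⟨∇_X ω_K, ω_I⟩` -/
def lambdaJ : V → C := fun X =>
  (1/(2*(n:ℝ))) • M.inner2 (fun Y Z => M.nab2 (M.omega M.K) X Y Z) (M.omega M.I)

/-- `λ_K(X) = (1/2n) ⟨∇_X ω_I, ω_J⟩` -/
def lambdaK : V → C := fun X =>
  (1/(2*(n:ℝ))) • M.inner2 (fun Y Z => M.nab2 (M.omega M.I) X Y Z) (M.omega M.J)

/-- codifferential of a two-form -/
def codiff2 (ψ : V → V → C) : V → C := fun Z => -∑ i, M.nab2 ψ (M.frame i) (M.frame i) Z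

/-- codifferential of a four-form -/
def codiff4 (ψ : V → V → V → V → C) : V → V → V → C :=
  fun X Y Z => -∑ i, M.nab4 ψ (M.frame i) (M.frame i) X Y Z

/-- `β_I = J dω_J + K dω_K` -/
def betaI : V → V → V → C := fun X Y Z =>
  act3 M.J (M.d2 (M.omega M.J)) X Y Z + act3 M.K (M.d2 (M.omega M.K)) X Y Z

/-- `β_J = K dω_K + I dω_I` -/
def betaJ : V → V → V → C := fun X Y Z =>
  act3 M.K (M.d2 (M.omega M.K)) X Y Z + act3 M.I (M.d2 (M.omega M.I)) X Y Z

/-- `β_K = I dω_I + J dω_J` -/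
def betaK : V → V → V → C := fun X Y Z =>
  act3 M.I (M.d2 (M.omega M.I)) X Y Z + act3 M.J (M.d2 (M.omega M.J)) X Y Z

/-- the intrinsic torsion
`ξ_X Y = -(1/4) Σ_A A (∇_X A) Y + (1/2) Σ_A λ_A(X) A Y` -/
def xi : V → V → V := fun X Y =>
  (-(1/4 : ℝ)) • (M.I (M.nabA M.I X Y) + M.J (M.nabA M.J X Y) + M.K (M.nabA M.K X Y))
    + (1/2 : ℝ) • (M.lambdaI X • M.I Y + M.lambdaJ X • M.J Y + M.lambdaK X • M.K Y)

/-- the one-form `ν^I_4 = I Λ_I β_I` -/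
def nu4I : V → C := act1 M.I (M.Lam M.I M.betaI)

/-- the one-form `ν^J_4 = J Λ_J β_J` -/
def nu4J : V → C := act1 M.J (M.Lam M.J M.betaJ)

/-- the one-form `ν^K_4 = K Λ_K β_K` -/
def nu4K : V → C := act1 M.K (M.Lam M.K M.betaK)

/-- `ν^I_3`, determined by `J Λ_J β_I = (1/(2n-1)) (ν^I_4 + (2n+1)(n-1) ν^I_3)` -/
def nu3I : V → C := fun X =>
  (1/((2*(n:ℝ)+1) * ((n:ℝ)-1))) •
    ((2*(n:ℝ)-1) • act1 M.J (M.Lam M.J M.betaI) X - M.nu4I X)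

/-- `ν^J_3`, determined by `K Λ_K β_J = (1/(2n-1)) (ν^J_4 + (2n+1)(n-1) ν^J_3)` -/
def nu3J : V → C := fun X =>
  (1/((2*(n:ℝ)+1) * ((n:ℝ)-1))) •
    ((2*(n:ℝ)-1) • act1 M.K (M.Lam M.K M.betaJ) X - M.nu4J X)

/-- `ν^K_3`, determined by `I Λ_I β_K = (1/(2n-1)) (ν^K_4 + (2n+1)(n-1) ν^K_3)` -/
def nu3K : V → C := fun X =>
  (1/((2*(n:ℝ)+1) * ((n:ℝ)-1))) •
    ((2*(n:ℝ)-1) • act1 M.I (M.Lam M.I M.betaK) X - M.nu4K X)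

/-- `β^{(E)}_{3I} = -(1/2) Jν^I_3 ∧ ω_J - (1/2) Kν^I_3 ∧ ω_K + (1/(2n-1)) Iν^I_3 ∧ ω_I` -/
def betaE3I : V → V → V → C := fun X Y Z =>
  (-(1/2:ℝ)) • wedge12 (act1 M.J M.nu3I) (M.omega M.J) X Y Z
    + (-(1/2:ℝ)) • wedge12 (act1 M.K M.nu3I) (M.omega M.K) X Y Z
    + (1/(2*(n:ℝ)-1)) • wedge12 (act1 M.I M.nu3I) (M.omega M.I) X Y Z

def betaE3J : V → V → V → C := fun X Y Z =>
  (-(1/2:ℝ)) • wedge12 (act1 M.K M.nu3J) (M.omega M.K) X Y Z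
    + (-(1/2:ℝ)) • wedge12 (act1 M.I M.nu3J) (M.omega M.I) X Y Z
    + (1/(2*(n:ℝ)-1)) • wedge12 (act1 M.J M.nu3J) (M.omega M.J) X Y Z

def betaE3K : V → V → V → C := fun X Y Z =>
  (-(1/2:ℝ)) • wedge12 (act1 M.I M.nu3K) (M.omega M.I) X Y Z
    + (-(1/2:ℝ)) • wedge12 (act1 M.J M.nu3K) (M.omega M.J) X Y Z
    + (1/(2*(n:ℝ)-1)) • wedge12 (act1 M.K M.nu3K) (M.omega M.K) X Y Z

/-- `β_{4I} = -(1/(2n-1)) Iν^I_4 ∧ ω_I` -/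
def beta4I : V → V → V → C := fun X Y Z =>
  (-(1/(2*(n:ℝ)-1))) • wedge12 (act1 M.I M.nu4I) (M.omega M.I) X Y Z

def beta4J : V → V → V → C := fun X Y Z =>
  (-(1/(2*(n:ℝ)-1))) • wedge12 (act1 M.J M.nu4J) (M.omega M.J) X Y Z

def beta4K : V → V → V → C := fun X Y Z =>
  (-(1/(2*(n:ℝ)-1))) • wedge12 (act1 M.K M.nu4K) (M.omega M.K) X Y Z

/-- `β_I^{(3+K)} = β_I - β^{(E)}_{3I} - β_{4I}` -/
def beta3KI : V → V → V → C := fun X Y Z => M.betaI X Y Z - M.betaE3I X Y Z - M.beta4I X Y Z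

def beta3KJ : V → V → V → C := fun X Y Z => M.betaJ X Y Z - M.betaE3J X Y Z - M.beta4J X Y Z

def beta3KK : V → V → V → C := fun X Y Z => M.betaK X Y Z - M.betaE3K X Y Z - M.beta4K X Y Z

/-- `β_I^{(3)} = (1/6) (2 - 𝓛_J - 𝓛_K) β_I^{(3+K)}` -/
def beta3I : V → V → V → C := fun X Y Z =>
  (1/6:ℝ) • ((2:ℝ) • M.beta3KI X Y Z - calL M.J M.beta3KI X Y Z - calL M.K M.beta3KI X Y Z)

def beta3J : V → V → V → C := fun X Y Z =>
  (1/6:ℝ) • ((2:ℝ) • M.beta3KJ X Y Z - calL M.K M.beta3KJ X Y Z - calL M.I M.beta3KJ X Y Z)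

def beta3K : V → V → V → C := fun X Y Z =>
  (1/6:ℝ) • ((2:ℝ) • M.beta3KK X Y Z - calL M.I M.beta3KK X Y Z - calL M.J M.beta3KK X Y Z)

/-- `β_I^{(K)} = (1/6) (4 + 𝓛_J + 𝓛_K) β_I^{(3+K)}` -/
def betaKI : V → V → V → C := fun X Y Z =>
  (1/6:ℝ) • ((4:ℝ) • M.beta3KI X Y Z + calL M.J M.beta3KI X Y Z + calL M.K M.beta3KI X Y Z)

def betaKJ : V → V → V → C := fun X Y Z =>
  (1/6:ℝ) • ((4:ℝ) • M.beta3KJ X Y Z + calL M.K M.beta3KJ X Y Z + calL M.I M.beta3KJ X Y Z)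

def betaKK : V → V → V → C := fun X Y Z =>
  (1/6:ℝ) • ((4:ℝ) • M.beta3KK X Y Z + calL M.I M.beta3KK X Y Z + calL M.J M.beta3KK X Y Z)

/-- the three-form `ψ^{(3)} = (1/12)(β_I^{(3)} + β_J^{(3)} + β_K^{(3)})` determining `ξ_{33}` -/
def psi3 : V → V → V → C := fun X Y Z =>
  (1/12:ℝ) • (M.beta3I X Y Z + M.beta3J X Y Z + M.beta3K X Y Z)

/-- the three-form `ψ^{(K)} = -(1/48)(β_I^{(K)} + β_J^{(K)} + β_K^{(K)})` determining `ξ_{KH}` -/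
def psiK : V → V → V → C := fun X Y Z =>
  (-(1/48:ℝ)) • (M.betaKI X Y Z + M.betaKJ X Y Z + M.betaKK X Y Z)

/-- the three-form `ψ^{(3)}_I` determining `ξ_{3H}` -/
def psi3I : V → V → V → C := fun X Y Z =>
  (-(1/8:ℝ)) • M.beta3I X Y Z
    + (1/48:ℝ) • ((3:ℝ) • (M.beta3I X Y Z + M.beta3J X Y Z + M.beta3K X Y Z)
        + calL M.I (fun a b c => M.beta3I a b c + M.beta3J a b c + M.beta3K a b c) X Y Z)

def psi3J : V → V → V → C := fun X Y Z =>
  (-(1/8:ℝ)) • M.beta3J X Y Z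
    + (1/48:ℝ) • ((3:ℝ) • (M.beta3I X Y Z + M.beta3J X Y Z + M.beta3K X Y Z)
        + calL M.J (fun a b c => M.beta3I a b c + M.beta3J a b c + M.beta3K a b c) X Y Z)

def psi3K : V → V → V → C := fun X Y Z =>
  (-(1/8:ℝ)) • M.beta3K X Y Z
    + (1/48:ℝ) • ((3:ℝ) • (M.beta3I X Y Z + M.beta3J X Y Z + M.beta3K X Y Z)
        + calL M.K (fun a b c => M.beta3I a b c + M.beta3J a b c + M.beta3K a b c) X Y Z)

/-- the three-form `ψ^{(K)}_I` determining `ξ_{K3}` -/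
def psiKI : V → V → V → C := fun X Y Z =>
  (-(1/2:ℝ)) • M.betaKI X Y Z
    + (1/6:ℝ) • (M.betaKI X Y Z + M.betaKJ X Y Z + M.betaKK X Y Z)

def psiKJ : V → V → V → C := fun X Y Z =>
  (-(1/2:ℝ)) • M.betaKJ X Y Z
    + (1/6:ℝ) • (M.betaKI X Y Z + M.betaKJ X Y Z + M.betaKK X Y Z)

def psiKK : V → V → V → C := fun X Y Z =>
  (-(1/2:ℝ)) • M.betaKK X Y Z
    + (1/6:ℝ) • (M.betaKI X Y Z + M.betaKJ X Y Z + M.betaKK X Y Z)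

/-- the one-form `θ^ξ` determining `ξ_{EH}`,
defined by `(6/n)(2n+1)(n-1) θ^ξ(X) = -⟨ξ_{e_i} e_i, X⟩` -/
def thetaXi : V → C := fun X =>
  (-((n:ℝ)/(6*(2*(n:ℝ)+1)*((n:ℝ)-1)))) • ∑ i, M.g (M.xi (M.frame i) (M.frame i)) X

/-- the local one-form `θ^ξ_I`, defined by `(2/n)(2n+1)(n-1) θ^ξ_I(X) = -⟨I ξ_{e_i} I e_i, X⟩` -/
def thetaXiI : V → C := fun X =>
  (-((n:ℝ)/(2*(2*(n:ℝ)+1)*((n:ℝ)-1)))) •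
    ∑ i, M.g (M.I (M.xi (M.frame i) (M.I (M.frame i)))) X

def thetaXiJ : V → C := fun X =>
  (-((n:ℝ)/(2*(2*(n:ℝ)+1)*((n:ℝ)-1)))) •
    ∑ i, M.g (M.J (M.xi (M.frame i) (M.J (M.frame i)))) X

def thetaXiK : V → C := fun X =>
  (-((n:ℝ)/(2*(2*(n:ℝ)+1)*((n:ℝ)-1)))) •
    ∑ i, M.g (M.K (M.xi (M.frame i) (M.K (M.frame i)))) X

/-- `α_I = -λ_I ⊗ g + (1/2)(J_(2) - J_(3)) ∇ω_K` -/
def alphaI : V → V → V → C := fun X Y Z =>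
  -(M.lambdaI X * M.g Y Z)
    + (1/2:ℝ) • (-(M.nab2 (M.omega M.K) X (M.J Y) Z) + M.nab2 (M.omega M.K) X Y (M.J Z))

def alphaJ : V → V → V → C := fun X Y Z =>
  -(M.lambdaJ X * M.g Y Z)
    + (1/2:ℝ) • (-(M.nab2 (M.omega M.I) X (M.K Y) Z) + M.nab2 (M.omega M.I) X Y (M.K Z))

def alphaK : V → V → V → C := fun X Y Z =>
  -(M.lambdaK X * M.g Y Z)
    + (1/2:ℝ) • (-(M.nab2 (M.omega M.J) X (M.I Y) Z) + M.nab2 (M.omega M.J) X Y (M.I Z))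

/-- the one-form `η_I(X) = α_I(e_i; e_i, X)` -/
def etaI : V → C := fun X => ∑ i, M.alphaI (M.frame i) (M.frame i) X

def etaJ : V → C := fun X => ∑ i, M.alphaJ (M.frame i) (M.frame i) X

def etaK : V → C := fun X => ∑ i, M.alphaK (M.frame i) (M.frame i) X

/-- the fundamental four-form `Ω = Σ_A ω_A ∧ ω_A` -/
def Omega4 : V → V → V → V → C := fun X Y Z W =>
  wedge22 (M.omega M.I) (M.omega M.I) X Y Z W
    + wedge22 (M.omega M.J) (M.omega M.J) X Y Z W
    + wedge22 (M.omega M.K) (M.omega M.K) X Y Z W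

/-- the one-form `θ^{d*Ω} = (1/3) Σ_A A Λ_A d*Ω` -/
def thetaDOmega : V → C := fun X =>
  (1/3:ℝ) • (act1 M.I (M.Lam M.I (M.codiff4 M.Omega4)) X
    + act1 M.J (M.Lam M.J (M.codiff4 M.Omega4)) X
    + act1 M.K (M.Lam M.K (M.codiff4 M.Omega4)) X)

/-- the vector-valued torsion: `g(W, T(X,Y)) = T(W,X,Y)` -/
def Tvec (T : V → V → V → C) : V → V → V := fun X Y => ∑ i, T (M.frame i) X Y • M.frame i

/-- the connection `∇ + (1/2) T` associated to a torsion (0,3)-tensor `T` -/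
def nabT (T : V → V → V → C) : V → V → V := fun X Y => M.nab X Y + (1/2:ℝ) • M.Tvec T X Y

/-- a connection is metric -/
def MetricConn (nab' : V → V → V) : Prop :=
  ∀ X Y Z, M.D X (M.g Y Z) = M.g (nab' X Y) Z + M.g Y (nab' X Z)

/-- a connection is quaternionic, with associated local one-forms `γ_I, γ_J, γ_K`:
`∇'_X I = γ_K(X) J - γ_J(X) K`, and cyclically -/
def QuatConn (nab' : V → V → V) (γI γJ γK : V → C) : Prop :=
  (∀ X Y, nab' X (M.I Y) - M.I (nab' X Y) = γK X • M.J Y - γJ X • M.K Y) ∧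
  (∀ X Y, nab' X (M.J Y) - M.J (nab' X Y) = γI X • M.K Y - γK X • M.I Y) ∧
  (∀ X Y, nab' X (M.K Y) - M.K (nab' X Y) = γJ X • M.I Y - γI X • M.J Y)

/-- the HKT condition: `I, J, K` integrable and there is a metric connection
`∇ + (1/2)T` with totally skew torsion making `I, J, K` parallel -/
def IsHKT : Prop :=
  (∀ X Y, M.nijV M.I X Y = 0) ∧ (∀ X Y, M.nijV M.J X Y = 0) ∧
  (∀ X Y, M.nijV M.K X Y = 0) ∧
  ∃ T : V → V → V → C, IsAlt3 T ∧ Lin3 T ∧ M.MetricConn (M.nabT T) ∧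
    (∀ X Y, M.nabT T X (M.I Y) = M.I (M.nabT T X Y)) ∧
    (∀ X Y, M.nabT T X (M.J Y) = M.J (M.nabT T X Y)) ∧
    (∀ X Y, M.nabT T X (M.K Y) = M.K (M.nabT T X Y))

/-- membership of a three-form in `KH`: type `{2,1}` for each `A` and `Λ_A ψ = 0` -/
def InKH3 (ψ : V → V → V → C) : Prop :=
  IsAlt3 ψ ∧ Lin3 ψ ∧
  calL M.I ψ = ψ ∧ calL M.J ψ = ψ ∧ calL M.K ψ = ψ ∧
  M.Lam M.I ψ = 0 ∧ M.Lam M.J ψ = 0 ∧ M.Lam M.K ψ = 0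

/-- the `(0,3)`-tensor of the `KH`-component of the torsion determined by `ψ^{(K)}`:
`3ψ - Σ_A A_(23) ψ` -/
def xiKH3 (ψ : V → V → V → C) : V → V → V → C := fun X Y Z =>
  (3:ℝ) • ψ X Y Z - (op23 M.I ψ X Y Z + op23 M.J ψ X Y Z + op23 M.K ψ X Y Z)

/-- the `(0,3)`-tensor of the `EH`-component of the torsion determined by the
one-form `θ`: `3 e_i ⊗ e_i ∧ θ - Σ_A (e_i ⊗ A e_i ∧ A θ + (2/n) A θ ⊗ ω_A)` -/
def xiEH3 (θ : V → C) : V → V → V → C := fun X Y Z =>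
  (3:ℝ) • ∑ i, M.g (M.frame i) X *
      (M.g (M.frame i) Y * θ Z - M.g (M.frame i) Z * θ Y)
  - ((∑ i, M.g (M.frame i) X *
        (M.g (M.I (M.frame i)) Y * act1 M.I θ Z - M.g (M.I (M.frame i)) Z * act1 M.I θ Y))
    + (∑ i, M.g (M.frame i) X *
        (M.g (M.J (M.frame i)) Y * act1 M.J θ Z - M.g (M.J (M.frame i)) Z * act1 M.J θ Y))
    + (∑ i, M.g (M.frame i) X *
        (M.g (M.K (M.frame i)) Y * act1 M.K θ Z - M.g (M.K (M.frame i)) Z * act1 M.K θ Y)))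
  - (2/(n:ℝ)) • (act1 M.I θ X * M.omega M.I Y Z + act1 M.J θ X * M.omega M.J Y Z
      + act1 M.K θ X * M.omega M.K Y Z)

/-- the intrinsic torsion lies in `(K+E)H`: it is the sum of a `KH`-tensor and an
`EH`-tensor as described in §3 of the paper -/
def inKEH : Prop :=
  ∃ (ψ : V → V → V → C) (θ : V → C), M.InKH3 ψ ∧ Lin1 θ ∧
    ∀ X Y Z, M.g Y (M.xi X Z) = M.xiKH3 ψ X Y Z + M.xiEH3 θ X Y Z

end derived

end AQH

/-!
Since `∇ + (1/2) T` is quaternionic, `∇ω_A` is given by the connection one-forms `γ_A` and by `T`.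
Contracting, each Lee form, each `λ_A` and each `Λ_A dω_B` becomes a combination of the `γ_A`,
rotated by `I, J, K`, and of the `Λ_A T`. The type condition `𝓛_A T = T` gives
`I Λ_I T = J Λ_J T = K Λ_K T`, so in each of (2), (3) and (5)-(7) the torsion terms cancel, and what
is left is a nonzero multiple of `J γ_J - K γ_K`, up to applying `I` in (5). The torsion also drops
out of the Nijenhuis tensor by `𝓛_I T = T`, leaving an expression in
`γ_J + I γ_K = -J (J γ_J - K γ_K)` whose trace over an orthonormal frame recovers this one-form.
-/

namespace AQH

section Tensors

variable {C V : Type*} [CommRing C]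

theorem IsAlt3.cycle {T : V → V → V → C} (hT : IsAlt3 T) (X Y Z : V) : T X Y Z = T Z X Y := by
  rw [hT.1 X Z Y, hT.2 X Y Z, neg_neg]

theorem IsAlt3.self_left [Algebra ℝ C] {T : V → V → V → C} (hT : IsAlt3 T) (X Y : V) :
    T X X Y = 0 :=
  have := IsAddTorsionFree.of_isTorsionFree ℝ C
  self_eq_neg.mp (hT.1 X X Y)

variable [AddCommGroup V] [Module C V]

theorem isLinearMap_of_map_smul_add {W : Type*} [AddCommGroup W] [Module C W] {A : V → W}
    (hA : ∀ (f : C) X Y, A (f • X + Y) = f • A X + A Y) : IsLinearMap C A where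
  map_add X Y := by simpa using hA 1 X Y
  map_smul f X := by
    have hzero : A 0 = 0 := by simpa using hA 1 0 0
    simpa [hzero] using hA f X 0

theorem Lin1.isLinearMap {ν : V → C} (hν : Lin1 ν) : IsLinearMap C ν :=
  isLinearMap_of_map_smul_add hν

theorem Lin1.comp {ν : V → C} (hν : Lin1 ν) {A : V → V} (hA : IsLinearMap C A) :
    Lin1 fun X => ν (A X) := fun f X Y => by
  simp only [hA.map_add, hA.map_smul, hν f]

theorem Lin1.act1 {ν : V → C} (hν : Lin1 ν) {A : V → V} (hA : IsLinearMap C A) :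
    Lin1 (act1 A ν) := fun f X Y => by
  simp only [AQH.act1, hA.map_add, hA.map_smul, hν f]
  ring

theorem lin1_op3 {A : V → V} {β : V → V → V → C} (hβ : ∀ X Y, Lin1 (β X Y))
    (hA : IsLinearMap C A) (X Y : V) : Lin1 (op3 A β X Y) :=
  (hβ X Y).act1 hA

theorem Lin3.lin1_third {T : V → V → V → C} (hlin : Lin3 T) (halt : IsAlt3 T) (X Y : V) :
    Lin1 (T X Y) := fun f Z Z' => by
  simp only [halt.cycle X Y, hlin f]

end Tensors

section Act1

variable {C V : Type*} [CommRing C]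

theorem act1_zero (A : V → V) : act1 A (0 : V → C) = 0 :=
  funext fun _ => neg_zero

theorem act1_add (A : V → V) (μ ν : V → C) : act1 A (μ + ν) = act1 A μ + act1 A ν :=
  funext fun _ => neg_add _ _

theorem act1_neg (A : V → V) (ν : V → C) : act1 A (-ν) = -act1 A ν := rfl

theorem act1_sub (A : V → V) (μ ν : V → C) : act1 A (μ - ν) = act1 A μ - act1 A ν :=
  funext fun _ => neg_sub' _ _

theorem act1_smul {R : Type*} [Monoid R] [DistribMulAction R C] (A : V → V) (r : R) (ν : V → C) :
    act1 A (r • ν) = r • act1 A ν :=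
  funext fun _ => (smul_neg _ _).symm

end Act1

section Structure

variable {n : ℕ} {C V : Type*} [CommRing C] [Algebra ℝ C] [AddCommGroup V] [Module C V]
  (M : AQH n C V)

theorem isLinearMap_I : IsLinearMap C M.I := isLinearMap_of_map_smul_add M.I_lin

theorem isLinearMap_J : IsLinearMap C M.J := isLinearMap_of_map_smul_add M.J_lin

theorem isLinearMap_g (X : V) : IsLinearMap C (M.g X) where
  map_add Y Z := by simp only [M.g_symm X, M.g_add]
  map_smul f Y := by simp only [M.g_symm X, M.g_smul, smul_eq_mul]

theorem J_I (X : V) : M.J (M.I X) = -M.K X := by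
  rw [M.K_def, M.anticomm, neg_neg]

theorem I_K (X : V) : M.I (M.K X) = -M.J X := by
  rw [M.K_def, M.I_sq]

theorem J_K (X : V) : M.J (M.K X) = M.I X := by
  rw [M.K_def, M.J_I, M.K_def, M.J_sq, M.isLinearMap_I.map_neg, neg_neg]

theorem K_J (X : V) : M.K (M.J X) = -M.I X := by
  rw [M.K_def, M.J_sq, M.isLinearMap_I.map_neg]

theorem K_sq (X : V) : M.K (M.K X) = -X := by
  rw [M.K_def, M.J_K, M.I_sq]

theorem K_metric (X Y : V) : M.g (M.K X) (M.K Y) = M.g X Y := by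
  rw [M.K_def, M.K_def, M.I_metric, M.J_metric]

/-- The same manifold with the adapted basis `(J, K, I)` in place of `(I, J, K)`. An identity
proved for one letter of the basis yields its cyclic permutations by applying it to `M.rotate`
and `M.rotate.rotate`. -/
def rotate : AQH n C V :=
  { M with
    I := M.J
    J := M.K
    K := M.I
    I_lin := M.J_lin
    J_lin := M.K_lin
    K_lin := M.I_lin
    I_sq := M.J_sq
    J_sq := M.K_sq
    K_def := fun X => (M.J_K X).symm
    anticomm := fun X => by rw [M.J_K, M.K_J, neg_neg]
    I_metric := M.J_metric
    J_metric := M.K_metric }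

/-- A field of endomorphisms that is skew-symmetric for the metric; this is what makes
`M.omega A` a two-form. -/
structure IsSkewEnd (A : V → V) : Prop where
  isLinearMap : IsLinearMap C A
  skew : ∀ X Y, M.g (A X) Y = -M.g X (A Y)

variable {M}

theorem IsSkewEnd.skew' {A : V → V} (hA : M.IsSkewEnd A) (X Y : V) :
    M.g X (A Y) = -M.g (A X) Y := by
  rw [hA.skew, neg_neg]

theorem IsSkewEnd.of_rotate {A : V → V} (hA : M.rotate.IsSkewEnd A) : M.IsSkewEnd A :=
  ⟨hA.isLinearMap, hA.skew⟩

variable (M)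

theorem isSkewEnd_I : M.IsSkewEnd M.I where
  isLinearMap := M.isLinearMap_I
  skew X Y := by rw [← M.I_metric X, M.I_sq, (M.isLinearMap_g _).map_neg, neg_neg]

theorem isSkewEnd_J : M.IsSkewEnd M.J := M.rotate.isSkewEnd_I.of_rotate

theorem isSkewEnd_K : M.IsSkewEnd M.K := M.rotate.isSkewEnd_J.of_rotate

end Structure

section QuaternionicOneForms

variable {n : ℕ} {C V : Type*} [CommRing C] [Algebra ℝ C] [AddCommGroup V] [Module C V]
  (M : AQH n C V) {ν : V → C}

theorem act1_I_act1_I (hν : Lin1 ν) : act1 M.I (act1 M.I ν) = -ν := funext fun X => by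
  simp only [act1, M.I_sq, hν.isLinearMap.map_neg, neg_neg, Pi.neg_apply]

theorem act1_I_inj {μ : V → C} (hμ : Lin1 μ) (hν : Lin1 ν) :
    act1 M.I μ = act1 M.I ν ↔ μ = ν := by
  refine ⟨fun h => ?_, congrArg _⟩
  rw [← neg_inj, ← M.act1_I_act1_I hμ, h, M.act1_I_act1_I hν]

theorem act1_J_act1_J (hν : Lin1 ν) : act1 M.J (act1 M.J ν) = -ν := M.rotate.act1_I_act1_I hν

theorem act1_I_act1_J (hν : Lin1 ν) : act1 M.I (act1 M.J ν) = act1 M.K ν := funext fun X => by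
  simp only [act1, M.J_I, hν.isLinearMap.map_neg, neg_neg]

theorem act1_J_act1_I (ν : V → C) : act1 M.J (act1 M.I ν) = -act1 M.K ν := funext fun X => by
  simp only [act1, M.K_def, neg_neg, Pi.neg_apply]

end QuaternionicOneForms

section Contractions

variable {n : ℕ} {C V : Type*} [CommRing C] [Algebra ℝ C] [AddCommGroup V] [Module C V]
  (M : AQH n C V) {A B : V → V} {ν : V → C} {T : V → V → V → C}

theorem sum_g_frame_mul (hν : Lin1 ν) (X : V) :
    ∑ i, M.g X (M.frame i) * ν (M.frame i) = ν X := by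
  have hmap := map_sum hν.isLinearMap.mk' (fun i => M.g X (M.frame i) • M.frame i) Finset.univ
  simp only [IsLinearMap.mk'_apply, ← M.frame_span X, hν.isLinearMap.map_smul, smul_eq_mul] at hmap
  exact hmap.symm

theorem sum_g_frame_frame : ∑ i, M.g (M.frame i) (M.frame i) = (4 * n : ℝ) • (1 : C) := by
  simp only [M.frame_orthonormal, if_true, Finset.sum_const, Finset.card_univ, Fintype.card_fin,
    ← Nat.cast_smul_eq_nsmul ℝ, Nat.cast_mul, Nat.cast_ofNat]

theorem inner2_add (ψ χ φ : V → V → C) : M.inner2 (ψ + χ) φ = M.inner2 ψ φ + M.inner2 χ φ := by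
  simp only [inner2, Pi.add_apply, add_mul, Finset.sum_add_distrib, smul_add]

theorem inner2_smul {R : Type*} [Monoid R] [DistribMulAction R C] [IsScalarTower R C C]
    [SMulCommClass ℝ R C] (r : R) (ψ φ : V → V → C) :
    M.inner2 (r • ψ) φ = r • M.inner2 ψ φ := by
  simp only [inner2, Pi.smul_apply, smul_mul_assoc, ← Finset.smul_sum]
  exact smul_comm _ _ _

theorem inner2_neg (ψ φ : V → V → C) : M.inner2 (-ψ) φ = -M.inner2 ψ φ := by
  simp only [inner2, Pi.neg_apply, neg_mul, Finset.sum_neg_distrib, smul_neg]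

theorem inner2_sub (ψ χ φ : V → V → C) : M.inner2 (ψ - χ) φ = M.inner2 ψ φ - M.inner2 χ φ := by
  rw [sub_eq_add_neg, inner2_add, inner2_neg, ← sub_eq_add_neg]

theorem inner2_comm (ψ φ : V → V → C) : M.inner2 ψ φ = M.inner2 φ ψ := by
  simp only [inner2, mul_comm]

theorem Lam_apply (A : V → V) (β : V → V → V → C) (X : V) :
    M.Lam A β X = M.inner2 (β X) (M.omega A) := rfl

theorem Lam_add (A : V → V) (β β' : V → V → V → C) :
    M.Lam A (β + β') = M.Lam A β + M.Lam A β' :=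
  funext fun X => M.inner2_add (β X) (β' X) _

theorem Lam_sub (A : V → V) (β β' : V → V → V → C) :
    M.Lam A (β - β') = M.Lam A β - M.Lam A β' :=
  funext fun X => M.inner2_sub (β X) (β' X) _

theorem lin1_omega (hA : IsLinearMap C A) (X : V) : Lin1 (M.omega A X) := fun f Y Z => by
  simp only [omega, hA.map_add, hA.map_smul, (M.isLinearMap_g X).map_add,
    (M.isLinearMap_g X).map_smul, smul_eq_mul]

variable {M}

theorem IsSkewEnd.omega_swap (hA : M.IsSkewEnd A) (X Y : V) :
    M.omega A Y X = -M.omega A X Y := by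
  rw [omega, hA.skew', M.g_symm, omega]

theorem IsSkewEnd.omega_self (hA : M.IsSkewEnd A) (X : V) : M.omega A X X = 0 :=
  have := IsAddTorsionFree.of_isTorsionFree ℝ C
  self_eq_neg.mp (hA.omega_swap X X)

theorem IsSkewEnd.inner2_swap_omega (hA : M.IsSkewEnd A) (F : V → V → C) :
    M.inner2 (fun X Y => F Y X) (M.omega A) = -M.inner2 F (M.omega A) := by
  rw [inner2, Finset.sum_comm, ← M.inner2_neg, inner2]
  simp only [Pi.neg_apply, neg_mul_comm, ← hA.omega_swap]

theorem IsSkewEnd.inner2_omega (hA : M.IsSkewEnd A) {F : V → V → C} (hF : ∀ X, Lin1 (F X)) :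
    M.inner2 F (M.omega A) = -((1 / 2 : ℝ) • ∑ i, F (M.frame i) (A (M.frame i))) := by
  have hrow : ∀ i, ∑ j, F (M.frame i) (M.frame j) * M.omega A (M.frame i) (M.frame j)
      = -F (M.frame i) (A (M.frame i)) := fun i => by
    rw [← M.sum_g_frame_mul (hF _), ← Finset.sum_neg_distrib]
    exact Finset.sum_congr rfl fun j _ => by rw [omega, hA.skew', mul_neg, mul_comm]
  rw [inner2, Finset.sum_congr rfl fun i _ => hrow i, Finset.sum_neg_distrib, smul_neg]

theorem IsSkewEnd.Lam_wedge12_omega (hA : M.IsSkewEnd A) (hB : M.IsSkewEnd B) (hν : Lin1 ν) :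
    M.Lam A (wedge12 ν (M.omega B))
      = M.inner2 (M.omega B) (M.omega A) • ν + AQH.act1 B (AQH.act1 A ν) := by
  funext X
  let F : V → V → C := fun Y Z => ν Z * M.omega B X Y
  have hF : ∀ Y, Lin1 (F Y) := fun Y f Z Z' => by simp only [F, hν f]; ring
  have hinner : M.inner2 F (M.omega A) = (1 / 2 : ℝ) • ν (A (B X)) := by
    rw [hA.inner2_omega hF, ← M.sum_g_frame_mul (hν.comp hA.isLinearMap)]
    simp only [F, omega, hB.skew', mul_neg, Finset.sum_neg_distrib, smul_neg, neg_neg, mul_comm]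
  have hsplit : wedge12 ν (M.omega B) X = ν X • M.omega B - (fun Y Z => F Z Y) + F := rfl
  rw [M.Lam_apply, hsplit, M.inner2_add, M.inner2_sub, M.inner2_smul,
    hA.inner2_swap_omega F, hinner]
  simp only [AQH.act1, Pi.add_apply, Pi.smul_apply, smul_eq_mul, mul_comm (ν X), neg_neg]
  module

variable (M)

theorem inner2_omega_I_omega_I :
    M.inner2 (M.omega M.I) (M.omega M.I) = (2 * n : ℝ) • (1 : C) := by
  rw [M.isSkewEnd_I.inner2_omega (M.lin1_omega M.isLinearMap_I)]
  simp only [omega, M.I_sq, (M.isLinearMap_g _).map_neg, Finset.sum_neg_distrib,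
    M.sum_g_frame_frame]
  module

theorem inner2_omega_J_omega_K : M.inner2 (M.omega M.J) (M.omega M.K) = 0 := by
  have hdiag : ∀ X, M.omega M.J X (M.K X) = 0 := fun X => by
    rw [omega, M.J_K]; exact M.isSkewEnd_I.omega_self X
  simp only [M.isSkewEnd_K.inner2_omega (M.lin1_omega M.isLinearMap_J), hdiag,
    Finset.sum_const_zero, smul_zero, neg_zero]

theorem inner2_omega_K_omega_J : M.inner2 (M.omega M.K) (M.omega M.J) = 0 := by
  rw [M.inner2_comm, M.inner2_omega_J_omega_K]

theorem Lam_J_op3_I {β : V → V → V → C} (hβ : ∀ X Y, Lin1 (β X Y)) :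
    M.Lam M.J (op3 M.I β) = -M.Lam M.K β := funext fun X => by
  rw [Pi.neg_apply, M.Lam_apply, M.isSkewEnd_J.inner2_omega (lin1_op3 hβ M.isLinearMap_I X),
    M.Lam_apply, M.isSkewEnd_K.inner2_omega (hβ X)]
  simp only [op3, ← M.K_def, Finset.sum_neg_distrib, smul_neg]

theorem Lam_K_op3_I {β : V → V → V → C} (hβ : ∀ X Y, Lin1 (β X Y)) :
    M.Lam M.K (op3 M.I β) = M.Lam M.J β := funext fun X => by
  rw [M.Lam_apply, M.isSkewEnd_K.inner2_omega (lin1_op3 hβ M.isLinearMap_I X),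
    M.Lam_apply, M.isSkewEnd_J.inner2_omega (hβ X)]
  simp only [op3, M.I_K, (hβ X _).isLinearMap.map_neg, neg_neg]

variable {M} in
theorem IsSkewEnd.Lam_op2 (hA : M.IsSkewEnd A) (B : V → V) (hT : IsAlt3 T) :
    M.Lam A (op2 B T) = M.Lam A (op3 B T) := by
  funext X
  have hswap : op2 B T X = -fun Y Z => op3 B T X Z Y := by
    funext Y Z
    simp only [op2, op3, Pi.neg_apply, hT.2 X Z]
  rw [M.Lam_apply, hswap, M.inner2_neg, hA.inner2_swap_omega, neg_neg, M.Lam_apply]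

theorem Lam_op1 (A B : V → V) (β : V → V → V → C) :
    M.Lam A (op1 B β) = AQH.act1 B (M.Lam A β) :=
  funext fun X => M.inner2_neg (β (B X)) _

theorem act1_I_Lam_K (halt : IsAlt3 T) (hlin : Lin3 T) (hT : calL M.I T = T) :
    act1 M.I (M.Lam M.K T) = -M.Lam M.J T := by
  have hthird : ∀ X Y, Lin1 (T X Y) := hlin.lin1_third halt
  have hsnd : ∀ X Y, Lin1 (op2 M.I T X Y) := fun X Y f Z Z' => by
    simp only [op2, hthird _ _ f]; ring
  have h12 : M.Lam M.J (op12 M.I T) = -act1 M.I (M.Lam M.K T) := by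
    have hop : op12 M.I T = op1 M.I (op2 M.I T) := by
      funext X Y Z; simp only [op12, op1, op2, neg_neg]
    rw [hop, M.Lam_op1, M.isSkewEnd_J.Lam_op2 _ halt, M.Lam_J_op3_I hthird, act1_neg]
  have h13 : M.Lam M.J (op13 M.I T) = -act1 M.I (M.Lam M.K T) := by
    have hop : op13 M.I T = op1 M.I (op3 M.I T) := by
      funext X Y Z; simp only [op13, op1, op3, neg_neg]
    rw [hop, M.Lam_op1, M.Lam_J_op3_I hthird, act1_neg]
  have h23 : M.Lam M.J (op23 M.I T) = -M.Lam M.J T := by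
    have hop : op23 M.I T = op3 M.I (op2 M.I T) := by
      funext X Y Z; simp only [op23, op2, op3, neg_neg]
    rw [hop, M.Lam_J_op3_I hsnd, M.isSkewEnd_K.Lam_op2 _ halt, M.Lam_K_op3_I hthird]
  have hsum : M.Lam M.J T = -act1 M.I (M.Lam M.K T) + -act1 M.I (M.Lam M.K T) + -M.Lam M.J T :=
    calc M.Lam M.J T = M.Lam M.J (op12 M.I T + op13 M.I T + op23 M.I T) := congrArg _ hT.symm
      _ = _ := by rw [M.Lam_add, M.Lam_add, h12, h13, h23]
  linear_combination (norm := module) (1 / 2 : ℝ) • hsum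

theorem lin1_Lam (A : V → V) (hT : Lin3 T) : Lin1 (M.Lam A T) := fun f X X' => by
  have hTX : T (f • X + X') = f • T X + T X' := funext₂ (hT f X X')
  simp only [M.Lam_apply, hTX, M.inner2_add, M.inner2_smul, smul_eq_mul]

theorem act1_I_Lam_J (halt : IsAlt3 T) (hlin : Lin3 T) (hT : calL M.I T = T) :
    act1 M.I (M.Lam M.J T) = M.Lam M.K T := by
  rw [← neg_neg (M.Lam M.J T), ← M.act1_I_Lam_K halt hlin hT, act1_neg,
    M.act1_I_act1_I (M.lin1_Lam M.K hlin), neg_neg]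

end Contractions

section LeviCivita

variable {n : ℕ} {C V : Type*} [CommRing C] [Algebra ℝ C] [AddCommGroup V] [Module C V]
  {M : AQH n C V} {A : V → V}

theorem nab2_omega (A : V → V) (X Y Z : V) :
    M.nab2 (M.omega A) X Y Z = M.g Y (M.nabA A X Z) := by
  rw [nab2, omega, M.nab_metric, nabA, (M.isLinearMap_g Y).map_sub]
  simp only [omega]
  ring

theorem nab2_omega_smul_add (hA : IsLinearMap C A) (f : C) (X X' : V) :
    M.nab2 (M.omega A) (f • X + X') = f • M.nab2 (M.omega A) X + M.nab2 (M.omega A) X' := by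
  funext Y Z
  have hnabA : M.nabA A (f • X + X') Z = f • M.nabA A X Z + M.nabA A X' Z := by
    simp only [nabA, M.nab_addX, M.nab_smulX, hA.map_add, hA.map_smul]
    module
  simp only [nab2_omega, hnabA, Pi.add_apply, Pi.smul_apply, (M.isLinearMap_g Y).map_add,
    (M.isLinearMap_g Y).map_smul]

theorem IsSkewEnd.d2_omega (hA : M.IsSkewEnd A) (X Y Z : V) :
    M.d2 (M.omega A) X Y Z = M.nab2 (M.omega A) X Y Z - M.nab2 (M.omega A) Y X Z
      + M.nab2 (M.omega A) Z X Y := by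
  have hbracket : ∀ X Y Z, M.omega A (M.bracket X Y) Z
      = M.omega A (M.nab X Y) Z - M.omega A (M.nab Y X) Z := fun X Y Z => by
    rw [hA.omega_swap Z, ← M.torsion_free, (M.lin1_omega hA.isLinearMap Z).isLinearMap.map_sub,
      hA.omega_swap (M.nab X Y) Z, hA.omega_swap (M.nab Y X) Z, neg_sub_neg, neg_sub]
  simp only [d2, nab2, hbracket]
  rw [hA.omega_swap (M.nab X Z) Y, hA.omega_swap (M.nab Y Z) X, hA.omega_swap (M.nab Z Y) X]
  ring

theorem lin1_lambdaK (M : AQH n C V) : Lin1 M.lambdaK := fun f X X' => by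
  simp only [lambdaK, nab2_omega_smul_add M.isLinearMap_I, M.inner2_add, M.inner2_smul, smul_add,
    smul_eq_mul, mul_smul_comm]

end LeviCivita

section Connection

variable {n : ℕ} {C V : Type*} [CommRing C] [Algebra ℝ C] [AddCommGroup V] [Module C V]

theorem g_Tvec (M : AQH n C V) {T : V → V → V → C} (hT : Lin3 T) (W X Y : V) :
    M.g W (M.Tvec T X Y) = T W X Y := by
  have hsum := map_sum (M.isLinearMap_g W).mk' (fun i => T (M.frame i) X Y • M.frame i) Finset.univ
  simp only [IsLinearMap.mk'_apply, (M.isLinearMap_g W).map_smul, smul_eq_mul] at hsum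
  rw [Tvec, hsum, ← M.sum_g_frame_mul (ν := fun W => T W X Y) (fun f W W' => hT f W W' X Y) W]
  simp only [mul_comm]

variable [Module ℝ V]

/-- The connection `∇ + (1/2) T` with totally skew torsion `T` is quaternionic, with connection
one-forms `γI, γJ, γK`. -/
structure IsSkewQuatConn (M : AQH n C V) (T : V → V → V → C) (γI γJ γK : V → C) : Prop where
  alt : IsAlt3 T
  lin : Lin3 T
  quat : M.QuatConn (M.nabT T) γI γJ γK

namespace IsSkewQuatConn

variable {M : AQH n C V} {T : V → V → V → C} {γI γJ γK : V → C}

theorem rotate (h : M.IsSkewQuatConn T γI γJ γK) : M.rotate.IsSkewQuatConn T γJ γK γI where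
  alt := h.alt
  lin := h.lin
  quat := ⟨h.quat.2.1, h.quat.2.2, h.quat.1⟩

variable [IsScalarTower ℝ C V]

theorem nabA_I (h : M.IsSkewQuatConn T γI γJ γK) (X Y : V) :
    M.nabA M.I X Y = γK X • M.J Y - γJ X • M.K Y
      - (1 / 2 : ℝ) • (M.Tvec T X (M.I Y) - M.I (M.Tvec T X Y)) := by
  have hI : M.I ((1 / 2 : ℝ) • M.Tvec T X Y) = (1 / 2 : ℝ) • M.I (M.Tvec T X Y) :=
    M.isLinearMap_I.mk'.map_smul_of_tower _ _
  rw [← h.quat.1 X Y, nabA, nabT, nabT, M.isLinearMap_I.map_add, hI]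
  module

theorem nab2_omega_I (h : M.IsSkewQuatConn T γI γJ γK) (X : V) :
    M.nab2 (M.omega M.I) X = γK X • M.omega M.J - γJ X • M.omega M.K
      - (1 / 2 : ℝ) • (op2 M.I T X + op3 M.I T X) := by
  funext Y Z
  have hreal : ∀ W, M.g Y ((1 / 2 : ℝ) • W) = (1 / 2 : ℝ) • M.g Y W :=
    (M.isLinearMap_g Y).mk'.map_smul_of_tower _
  have htorsion : M.g Y (M.Tvec T X (M.I Z) - M.I (M.Tvec T X Z))
      = op2 M.I T X Y Z + op3 M.I T X Y Z := by
    rw [(M.isLinearMap_g Y).map_sub, M.isSkewEnd_I.skew', M.g_Tvec h.lin, M.g_Tvec h.lin,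
      h.alt.1 X Y, h.alt.1 X (M.I Y), op2, op3]
    ring
  simp only [nab2_omega, h.nabA_I, (M.isLinearMap_g Y).map_sub, (M.isLinearMap_g Y).map_smul, hreal,
    ← htorsion, Pi.sub_apply, Pi.smul_apply, Pi.add_apply, omega]

theorem d2_omega_I (h : M.IsSkewQuatConn T γI γJ γK) :
    M.d2 (M.omega M.I) = wedge12 γK (M.omega M.J) - wedge12 γJ (M.omega M.K)
      - (op1 M.I T + op2 M.I T + op3 M.I T) := by
  funext X Y Z
  have h2YXZ : op2 M.I T Y X Z = -op1 M.I T X Y Z := by simp only [op1, op2, h.alt.1 Y, neg_neg]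
  have h3YXZ : op3 M.I T Y X Z = -op3 M.I T X Y Z := by simp only [op3, h.alt.1 Y, neg_neg]
  have h2ZXY : op2 M.I T Z X Y = op1 M.I T X Y Z := by simp only [op1, op2, h.alt.cycle _ _ Z]
  have h3ZXY : op3 M.I T Z X Y = op2 M.I T X Y Z := by simp only [op2, op3, h.alt.cycle _ _ Z]
  rw [M.isSkewEnd_I.d2_omega]
  simp only [h.nab2_omega_I, wedge12, Pi.add_apply, Pi.sub_apply, Pi.smul_apply, smul_eq_mul,
    h2YXZ, h3YXZ, h2ZXY, h3ZXY]
  module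

end IsSkewQuatConn

end Connection

section ConnectionForms

variable {n : ℕ} {C V : Type*} [CommRing C] [Algebra ℝ C] [AddCommGroup V] [Module C V]
  [Module ℝ V] [IsScalarTower ℝ C V]
variable {M : AQH n C V} {T : V → V → V → C} {γI γJ γK : V → C}

namespace IsSkewQuatConn

theorem lambdaK_eq (h : M.IsSkewQuatConn T γI γJ γK) (hn : n ≠ 0) :
    M.lambdaK = γK + (1 / (2 * n) : ℝ) • M.Lam M.K T := funext fun X => by
  have hT : M.inner2 (op2 M.I T X + op3 M.I T X) (M.omega M.J) = (-2 : ℝ) • M.Lam M.K T X := by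
    rw [M.inner2_add, ← M.Lam_apply, ← M.Lam_apply, M.isSkewEnd_J.Lam_op2 _ h.alt,
      M.Lam_J_op3_I (h.lin.lin1_third h.alt), Pi.neg_apply]
    module
  have hωJ : M.inner2 (M.omega M.J) (M.omega M.J) = (2 * n : ℝ) • (1 : C) :=
    M.rotate.inner2_omega_I_omega_I
  have hn' : (n : ℝ) ≠ 0 := Nat.cast_ne_zero.mpr hn
  change (1 / (2 * n) : ℝ) • M.inner2 (M.nab2 (M.omega M.I) X) (M.omega M.J) = _
  rw [h.nab2_omega_I, M.inner2_sub, M.inner2_sub, M.inner2_smul, M.inner2_smul, M.inner2_smul, hT,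
    hωJ, M.inner2_omega_K_omega_J, smul_zero, sub_zero, smul_eq_mul, mul_smul_comm, mul_one]
  simp only [Pi.add_apply, Pi.smul_apply]
  match_scalars <;> field_simp

theorem lin1_γK (h : M.IsSkewQuatConn T γI γJ γK) (hn : n ≠ 0) : Lin1 γK := by
  have hγ : γK = M.lambdaK - (1 / (2 * n) : ℝ) • M.Lam M.K T := by
    rw [h.lambdaK_eq hn, add_sub_cancel_right]
  intro f X X'
  simp only [hγ, Pi.sub_apply, Pi.smul_apply, M.lin1_lambdaK f, M.lin1_Lam M.K h.lin f, smul_add,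
    mul_sub, mul_smul_comm]
  abel

theorem codiff2_omega_I (h : M.IsSkewQuatConn T γI γJ γK) (hn : n ≠ 0) :
    M.codiff2 (M.omega M.I) = act1 M.J γK - act1 M.K γJ + M.Lam M.I T := funext fun Z => by
  have hLam : M.Lam M.I T Z = (1 / 2 : ℝ) • ∑ i, op2 M.I T (M.frame i) (M.frame i) Z := by
    rw [M.Lam_apply, M.isSkewEnd_I.inner2_omega (h.lin.lin1_third h.alt Z), ← smul_neg,
      ← Finset.sum_neg_distrib]
    simp only [op2, h.alt.cycle _ _ Z]
  have hcontract : ∀ {ν : V → C} (A : V → V), Lin1 ν →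
      ∑ i, ν (M.frame i) * M.omega A (M.frame i) Z = -act1 A ν Z := fun A hν => by
    rw [act1, neg_neg, ← M.sum_g_frame_mul hν]
    exact Finset.sum_congr rfl fun i _ => by rw [omega, M.g_symm, mul_comm]
  simp only [codiff2, h.nab2_omega_I, Pi.add_apply, Pi.sub_apply, Pi.smul_apply, smul_eq_mul,
    Finset.sum_sub_distrib, hcontract _ (h.lin1_γK hn), hcontract _ (h.rotate.rotate.lin1_γK hn),
    op3, h.alt.self_left, neg_zero, add_zero, ← Finset.smul_sum, hLam]
  ring

theorem Lam_J_d2_omega_I (h : M.IsSkewQuatConn T γI γJ γK) (hn : n ≠ 0) (hT : calL M.I T = T) :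
    M.Lam M.J (M.d2 (M.omega M.I)) = (2 * n - 1 : ℝ) • γK + act1 M.I γJ + M.Lam M.K T := by
  have hγK := h.lin1_γK hn
  have hγJ := h.rotate.rotate.lin1_γK hn
  have hωJ : M.inner2 (M.omega M.J) (M.omega M.J) = (2 * n : ℝ) • (1 : C) :=
    M.rotate.inner2_omega_I_omega_I
  have hKJ : act1 M.K (act1 M.J γJ) = -act1 M.I γJ := M.rotate.act1_J_act1_I γJ
  rw [h.d2_omega_I, M.Lam_sub, M.Lam_sub, M.Lam_add, M.Lam_add, M.Lam_op1,
    M.act1_I_Lam_J h.alt h.lin hT, M.isSkewEnd_J.Lam_op2 _ h.alt,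
    M.Lam_J_op3_I (h.lin.lin1_third h.alt),
    M.isSkewEnd_J.Lam_wedge12_omega M.isSkewEnd_J hγK,
    M.isSkewEnd_J.Lam_wedge12_omega M.isSkewEnd_K hγJ, hωJ, M.inner2_omega_K_omega_J,
    M.act1_J_act1_J hγK, hKJ, smul_assoc, one_smul]
  module

theorem Lam_K_d2_omega_I (h : M.IsSkewQuatConn T γI γJ γK) (hn : n ≠ 0) (hT : calL M.I T = T) :
    M.Lam M.K (M.d2 (M.omega M.I)) = -((2 * n - 1 : ℝ) • γJ) + act1 M.I γK - M.Lam M.J T := by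
  have hγK := h.lin1_γK hn
  have hγJ := h.rotate.rotate.lin1_γK hn
  have hωK : M.inner2 (M.omega M.K) (M.omega M.K) = (2 * n : ℝ) • (1 : C) :=
    M.rotate.rotate.inner2_omega_I_omega_I
  have hJK : act1 M.J (act1 M.K γK) = act1 M.I γK := M.rotate.act1_I_act1_J hγK
  have hKK : act1 M.K (act1 M.K γJ) = -γJ := M.rotate.rotate.act1_I_act1_I hγJ
  rw [h.d2_omega_I, M.Lam_sub, M.Lam_sub, M.Lam_add, M.Lam_add, M.Lam_op1,
    M.act1_I_Lam_K h.alt h.lin hT, M.isSkewEnd_K.Lam_op2 _ h.alt,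
    M.Lam_K_op3_I (h.lin.lin1_third h.alt),
    M.isSkewEnd_K.Lam_wedge12_omega M.isSkewEnd_J hγK,
    M.isSkewEnd_K.Lam_wedge12_omega M.isSkewEnd_K hγJ, hωK, M.inner2_omega_J_omega_K, hJK, hKK,
    smul_assoc, one_smul]
  module

end IsSkewQuatConn

end ConnectionForms

section Nijenhuis

variable {n : ℕ} {C V : Type*} [CommRing C] [Algebra ℝ C] [AddCommGroup V] [Module C V]

theorem ext_g (M : AQH n C V) {X Y : V} (h : ∀ W, M.g W X = M.g W Y) : X = Y := by
  rw [M.frame_span X, M.frame_span Y]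
  simp only [M.g_symm _ (M.frame _), h]

variable {M : AQH n C V} {T : V → V → V → C} {γI γJ γK ν : V → C}

theorem Tvec_nij_eq_zero (hlin : Lin3 T) (hT : calL M.I T = T) (X Y : V) :
    M.Tvec T X Y + M.I (M.Tvec T (M.I X) Y) + M.I (M.Tvec T X (M.I Y))
      - M.Tvec T (M.I X) (M.I Y) = 0 := by
  refine M.ext_g fun W => ?_
  have hW : T (M.I W) (M.I X) Y + T (M.I W) X (M.I Y) + T W (M.I X) (M.I Y) = T W X Y :=
    congrFun₃ hT W X Y
  rw [(M.isLinearMap_g W).map_sub, (M.isLinearMap_g W).map_add, (M.isLinearMap_g W).map_add,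
    (M.isLinearMap_g W).map_zero, M.isSkewEnd_I.skew', M.isSkewEnd_I.skew']
  simp only [M.g_Tvec hlin]
  linear_combination -hW

theorem g_J_K (M : AQH n C V) (X Y : V) : M.g (M.J X) (M.K Y) = -M.omega M.I X Y := by
  rw [M.isSkewEnd_J.skew, M.J_K, omega]

theorem eq_zero_of_smul_J_add_smul_K_symm (M : AQH n C V) (hn : n ≠ 0) (hν : Lin1 ν)
    (h : ∀ X Y, ν X • M.J Y + ν (M.I X) • M.K Y = ν Y • M.J X + ν (M.I Y) • M.K X) :
    ν = 0 := funext fun X => by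
  have hpair : ∀ i, ν X * M.g (M.frame i) (M.frame i)
      = M.g X (M.frame i) * ν (M.frame i)
        - M.g (M.I X) (M.frame i) * ν (M.I (M.frame i)) := fun i => by
    have hJ := congrArg (M.g (M.J (M.frame i))) (h X (M.frame i))
    simp only [(M.isLinearMap_g _).map_add, (M.isLinearMap_g _).map_smul, smul_eq_mul, M.J_metric,
      M.g_J_K, M.isSkewEnd_I.omega_self] at hJ
    rw [omega] at hJ
    rw [M.g_symm X, M.g_symm (M.I X)]
    linear_combination hJ
  have htrace : (4 * n : ℝ) • ν X = (2 : ℝ) • ν X :=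
    calc (4 * n : ℝ) • ν X = ∑ i, ν X * M.g (M.frame i) (M.frame i) := by
          rw [← Finset.mul_sum, M.sum_g_frame_frame, mul_smul_comm, mul_one]
      _ = ν X - ν (M.I (M.I X)) := by
          rw [Finset.sum_congr rfl fun i _ => hpair i, Finset.sum_sub_distrib,
            M.sum_g_frame_mul hν, M.sum_g_frame_mul (hν.comp M.isLinearMap_I)]
      _ = (2 : ℝ) • ν X := by
          rw [M.I_sq, hν.isLinearMap.map_neg, sub_neg_eq_add, two_smul]
  have hne : (4 * n - 2 : ℝ) ≠ 0 := by
    have : (1 : ℝ) ≤ n := Nat.one_le_cast.mpr (Nat.one_le_iff_ne_zero.mpr hn)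
    linarith
  rwa [← sub_eq_zero, ← sub_smul, smul_eq_zero_iff_right hne] at htrace

variable [Module ℝ V]

namespace IsSkewQuatConn

theorem bracket_eq (h : M.IsSkewQuatConn T γI γJ γK) (X Y : V) :
    M.bracket X Y = M.nabT T X Y - M.nabT T Y X - M.Tvec T X Y := by
  have hskew : M.Tvec T Y X = -M.Tvec T X Y := M.ext_g fun W => by
    rw [(M.isLinearMap_g W).map_neg, M.g_Tvec h.lin, M.g_Tvec h.lin, h.alt.2]
  rw [← M.torsion_free, nabT, nabT, hskew]
  module

theorem nijV_I (h : M.IsSkewQuatConn T γI γJ γK) (hT : calL M.I T = T) (hγK : Lin1 γK) (X Y : V) :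
    M.nijV M.I X Y
      = (γJ + act1 M.I γK) X • M.J Y + (γJ + act1 M.I γK) (M.I X) • M.K Y
        - (γJ + act1 M.I γK) Y • M.J X - (γJ + act1 M.I γK) (M.I Y) • M.K X := by
  have hnab : ∀ X Y, M.nabT T X (M.I Y)
      = M.I (M.nabT T X Y) + (γK X • M.J Y - γJ X • M.K Y) := fun X Y =>
    sub_eq_iff_eq_add'.mp (h.quat.1 X Y)
  have hI := M.isLinearMap_I
  simp only [nijV, h.bracket_eq, hnab, hI.map_add, hI.map_sub, hI.map_smul, M.I_sq, ← M.K_def,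
    M.I_K, Pi.add_apply, act1, hγK.isLinearMap.map_neg]
  linear_combination (norm := module) -(Tvec_nij_eq_zero h.lin hT X Y)

variable [IsScalarTower ℝ C V]

theorem nijV_I_eq_zero_iff (h : M.IsSkewQuatConn T γI γJ γK) (hn : n ≠ 0) (hT : calL M.I T = T) :
    (∀ X Y, M.nijV M.I X Y = 0) ↔ act1 M.J γJ = act1 M.K γK := by
  have hγK : Lin1 γK := h.lin1_γK hn
  have hγJ : Lin1 γJ := h.rotate.rotate.lin1_γK hn
  set σ := γJ + act1 M.I γK with hσ_def
  have hσ : Lin1 σ := fun f X X' => by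
    simp only [hσ_def, Pi.add_apply, hγJ f, hγK.act1 M.isLinearMap_I f]
    ring
  have hJσ : act1 M.J σ = act1 M.J γJ - act1 M.K γK := by
    rw [hσ_def, act1_add, M.act1_J_act1_I, ← sub_eq_add_neg]
  have hσ_iff : act1 M.J γJ = act1 M.K γK ↔ σ = 0 := by
    rw [← sub_eq_zero, ← hJσ]
    refine ⟨fun hJσ0 => ?_, fun hσ0 => by rw [hσ0, act1_zero]⟩
    rw [← neg_eq_zero, ← M.act1_J_act1_J hσ, hJσ0, act1_zero]
  have hnij : ∀ X Y, M.nijV M.I X Y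
      = σ X • M.J Y + σ (M.I X) • M.K Y - σ Y • M.J X - σ (M.I Y) • M.K X := h.nijV_I hT hγK
  rw [hσ_iff]
  refine ⟨fun hN => M.eq_zero_of_smul_J_add_smul_K_symm hn hσ fun X Y => ?_, fun hσ0 X Y => ?_⟩
  · rw [← sub_eq_zero, ← sub_sub, ← hnij, hN]
  · simp only [hnij, hσ0, Pi.zero_apply, zero_smul, add_zero, sub_zero]

end IsSkewQuatConn

end Nijenhuis

theorem eq_iff_eq_of_sub_eq_smul {R W : Type*} [Ring R] [IsDomain R] [AddCommGroup W] [Module R W]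
    [Module.IsTorsionFree R W] {r : R} (hr : r ≠ 0) {f g u v : W} (h : f - g = r • (u - v)) :
    f = g ↔ u = v := by
  rw [← sub_eq_zero, h, smul_eq_zero_iff_right hr, sub_eq_zero]

section QKT

variable {n : ℕ} {C V : Type*} [CommRing C] [Algebra ℝ C] [AddCommGroup V] [Module C V]
variable {M : AQH n C V} {T : V → V → V → C} {γI γJ γK : V → C}

theorem act1_J_Lam_J_eq_act1_K_Lam_K (halt : IsAlt3 T) (hlin : Lin3 T) (hT : calL M.I T = T) :
    act1 M.J (M.Lam M.J T) = act1 M.K (M.Lam M.K T) := by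
  rw [← neg_neg (M.Lam M.J T), ← M.act1_I_Lam_K halt hlin hT, act1_neg, M.act1_J_act1_I, neg_neg]

variable [Module ℝ V]

/-- A QKT-structure: the skew torsion three-form `T` of the quaternionic connection `∇ + (1/2) T`
lies in `(K+E)H`, which is encoded as `𝓛_A T = T` for `A = I, J, K`. -/
structure IsQKT (M : AQH n C V) (T : V → V → V → C) (γI γJ γK : V → C) : Prop
    extends M.IsSkewQuatConn T γI γJ γK where
  calL_I : calL M.I T = T
  calL_J : calL M.J T = T
  calL_K : calL M.K T = T

namespace IsQKT

variable [IsScalarTower ℝ C V]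

theorem act1_lambda_eq_iff (h : M.IsQKT T γI γJ γK) (hn : n ≠ 0) :
    act1 M.J M.lambdaJ = act1 M.K M.lambdaK ↔ act1 M.J γJ = act1 M.K γK := by
  have hlamJ : M.lambdaJ = γJ + (1 / (2 * n) : ℝ) • M.Lam M.J T := h.rotate.rotate.lambdaK_eq hn
  refine eq_iff_eq_of_sub_eq_smul (one_ne_zero (α := ℝ)) ?_
  rw [h.lambdaK_eq hn, hlamJ, act1_add, act1_add, act1_smul, act1_smul,
    act1_J_Lam_J_eq_act1_K_Lam_K h.alt h.lin h.calL_I]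
  module

theorem act1_codiff2_omega_eq_iff (h : M.IsQKT T γI γJ γK) (hn : n ≠ 0) :
    act1 M.J (M.codiff2 (M.omega M.J)) = act1 M.K (M.codiff2 (M.omega M.K))
      ↔ act1 M.J γJ = act1 M.K γK := by
  have hγI : Lin1 γI := h.rotate.lin1_γK hn
  have hγJ : Lin1 γJ := h.rotate.rotate.lin1_γK hn
  have hJ : M.codiff2 (M.omega M.J) = act1 M.K γI - act1 M.I γK + M.Lam M.J T :=
    h.rotate.codiff2_omega_I hn
  have hK : M.codiff2 (M.omega M.K) = act1 M.I γJ - act1 M.J γI + M.Lam M.K T :=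
    h.rotate.rotate.codiff2_omega_I hn
  have hJK : act1 M.J (act1 M.K γI) = act1 M.I γI := M.rotate.act1_I_act1_J hγI
  have hKJ : act1 M.K (act1 M.J γI) = -act1 M.I γI := M.rotate.act1_J_act1_I γI
  have hKI : act1 M.K (act1 M.I γJ) = act1 M.J γJ := M.rotate.rotate.act1_I_act1_J hγJ
  refine eq_iff_eq_of_sub_eq_smul (neg_ne_zero.mpr (one_ne_zero (α := ℝ))) ?_
  rw [hJ, hK, act1_add, act1_add, act1_sub, act1_sub, hJK, hKJ, hKI, M.act1_J_act1_I,
    act1_J_Lam_J_eq_act1_K_Lam_K h.alt h.lin h.calL_I]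
  module

theorem Lam_d2_omega_eq_neg_iff (h : M.IsQKT T γI γJ γK) (hn : n ≠ 0) :
    M.Lam M.K (M.d2 (M.omega M.J)) = -M.Lam M.J (M.d2 (M.omega M.K))
      ↔ act1 M.J γJ = act1 M.K γK := by
  have hγJ : Lin1 γJ := h.rotate.rotate.lin1_γK hn
  have hγK : Lin1 γK := h.lin1_γK hn
  have hJ : M.Lam M.K (M.d2 (M.omega M.J))
      = (2 * n - 1 : ℝ) • γI + act1 M.J γK + M.Lam M.I T :=
    h.rotate.Lam_J_d2_omega_I hn h.calL_J
  have hK : M.Lam M.J (M.d2 (M.omega M.K))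
      = -((2 * n - 1 : ℝ) • γI) + act1 M.K γJ - M.Lam M.I T :=
    h.rotate.rotate.Lam_K_d2_omega_I hn h.calL_K
  have hIK : act1 M.I (act1 M.K γK) = -act1 M.J γK := M.rotate.rotate.act1_J_act1_I γK
  rw [← M.act1_I_inj (hγJ.act1 M.isLinearMap_J) (hγK.act1 M.isSkewEnd_K.isLinearMap)]
  refine eq_iff_eq_of_sub_eq_smul (one_ne_zero (α := ℝ)) ?_
  rw [hJ, hK, M.act1_I_act1_J hγJ, hIK]
  module

theorem act1_Lam_d2_omega_I_eq_neg_iff (h : M.IsQKT T γI γJ γK) (hn : 1 < n) :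
    act1 M.J (M.Lam M.K (M.d2 (M.omega M.I))) = -act1 M.K (M.Lam M.J (M.d2 (M.omega M.I)))
      ↔ act1 M.J γJ = act1 M.K γK := by
  have hn0 : n ≠ 0 := by omega
  have hγJ : Lin1 γJ := h.rotate.rotate.lin1_γK hn0
  have hKI : act1 M.K (act1 M.I γJ) = act1 M.J γJ := M.rotate.rotate.act1_I_act1_J hγJ
  have hr : -(2 * (n - 1) : ℝ) ≠ 0 :=
    neg_ne_zero.mpr (mul_ne_zero two_ne_zero (sub_ne_zero.mpr (Nat.one_lt_cast.mpr hn).ne'))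
  refine eq_iff_eq_of_sub_eq_smul hr ?_
  rw [h.Lam_J_d2_omega_I hn0 h.calL_I, h.Lam_K_d2_omega_I hn0 h.calL_I, act1_sub]
  simp only [act1_add, act1_neg, act1_smul, M.act1_J_act1_I, hKI,
    act1_J_Lam_J_eq_act1_K_Lam_K h.alt h.lin h.calL_I]
  module

theorem act1_Lam_I_d2_omega_eq_neg_iff (h : M.IsQKT T γI γJ γK) (hn : n ≠ 0) :
    act1 M.J (M.Lam M.I (M.d2 (M.omega M.K))) = -act1 M.K (M.Lam M.I (M.d2 (M.omega M.J)))
      ↔ act1 M.J γJ = act1 M.K γK := by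
  have hγI : Lin1 γI := h.rotate.lin1_γK hn
  have hK : M.Lam M.I (M.d2 (M.omega M.K))
      = (2 * n - 1 : ℝ) • γJ + act1 M.K γI + M.Lam M.J T :=
    h.rotate.rotate.Lam_J_d2_omega_I hn h.calL_K
  have hJ : M.Lam M.I (M.d2 (M.omega M.J))
      = -((2 * n - 1 : ℝ) • γK) + act1 M.J γI - M.Lam M.K T :=
    h.rotate.Lam_K_d2_omega_I hn h.calL_J
  have hJK : act1 M.J (act1 M.K γI) = act1 M.I γI := M.rotate.act1_I_act1_J hγI
  have hKJ : act1 M.K (act1 M.J γI) = -act1 M.I γI := M.rotate.act1_J_act1_I γI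
  have hr : (2 * n - 1 : ℝ) ≠ 0 := by
    have : (1 : ℝ) ≤ n := Nat.one_le_cast.mpr (Nat.one_le_iff_ne_zero.mpr hn)
    linarith
  refine eq_iff_eq_of_sub_eq_smul hr ?_
  rw [hK, hJ, act1_sub]
  simp only [act1_add, act1_neg, act1_smul, hJK, hKJ,
    act1_J_Lam_J_eq_act1_K_Lam_K h.alt h.lin h.calL_I]
  module

end IsQKT

end QKT

end AQH

open AQH in
/-- Let `M` be a QKT-manifold of dimension `4n > 4` with
torsion three-form `T` and associated one-forms `γ_A`.  For the local adapted
basis `I, J, K` the following are equivalent: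
(1) `I` is integrable (`N_I = 0`); (2) `J d*ω_J = K d*ω_K`; (3) `Jλ_J = Kλ_K`;
(4) `Jγ_J = Kγ_K`; (5) `Λ_K dω_J = -Λ_J dω_K`; (6) `JΛ_K dω_I = -KΛ_J dω_I`;
(7) `JΛ_I dω_K = -KΛ_I dω_J`. -/
theorem statement19 {n : ℕ} {C V : Type*} [CommRing C] [Algebra ℝ C] [AddCommGroup V]
    [Module C V] [Module ℝ V] [IsScalarTower ℝ C V]
    (hn : 1 < n) (M : AQH n C V)
    (T : V → V → V → C) (γI γJ γK : V → C)
    (hTalt : AQH.IsAlt3 T) (hTlin : AQH.Lin3 T)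
    (hTtype : calL M.I T = T ∧ calL M.J T = T ∧ calL M.K T = T)
    (hTmetric : M.MetricConn (M.nabT T))
    (hTquat : M.QuatConn (M.nabT T) γI γJ γK) :
    [ (∀ X Y, M.nijV M.I X Y = 0),
      act1 M.J (M.codiff2 (M.omega M.J)) = act1 M.K (M.codiff2 (M.omega M.K)),
      act1 M.J M.lambdaJ = act1 M.K M.lambdaK,
      act1 M.J γJ = act1 M.K γK,
      M.Lam M.K (M.d2 (M.omega M.J)) = -M.Lam M.J (M.d2 (M.omega M.K)),
      act1 M.J (M.Lam M.K (M.d2 (M.omega M.I)))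
        = -act1 M.K (M.Lam M.J (M.d2 (M.omega M.I))),
      act1 M.J (M.Lam M.I (M.d2 (M.omega M.K)))
        = -act1 M.K (M.Lam M.I (M.d2 (M.omega M.J))) ].TFAE := by
  have h : M.IsQKT T γI γJ γK :=
    ⟨⟨hTalt, hTlin, hTquat⟩, hTtype.1, hTtype.2.1, hTtype.2.2⟩
  have hn0 : n ≠ 0 := Nat.ne_zero_of_lt hn
  tfae_have 1 ↔ 4 := h.nijV_I_eq_zero_iff hn0 h.calL_I
  tfae_have 2 ↔ 4 := h.act1_codiff2_omega_eq_iff hn0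
  tfae_have 3 ↔ 4 := h.act1_lambda_eq_iff hn0
  tfae_have 5 ↔ 4 := h.Lam_d2_omega_eq_neg_iff hn0
  tfae_have 6 ↔ 4 := h.act1_Lam_d2_omega_I_eq_neg_iff hn
  tfae_have 7 ↔ 4 := h.act1_Lam_I_d2_omega_eq_neg_iff hn0
  tfae_finish
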